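/- For every probability mass function Q on Â and every D ≥ 0, R(P,Q,D) = (log₂ e)·Λ*_{P,Q}(D). -/

import Mathlib

open Real MeasureTheory Finset
open scoped Classical

/-- `Q` is a probability mass function on `Fin k`. -/
def IsPmf {k : ℕ} (Q : Fin k → ℝ) : Prop := (∀ j, 0 ≤ Q j) ∧ ∑ j, Q j = 1

/-- `Λ_{P,Q}(λ) = E_P[ln Σ_j Q_j e^{λ ρ(X,a_j)}]`. -/
noncomputable def Lam {k : ℕ} (P : Measure ℝ) (ρ : ℝ → Fin k → ℝ)
    (Q : Fin k → ℝ) (l : ℝ) : ℝ :=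
  ∫ x, Real.log (∑ j, Q j * Real.exp (l * ρ x j)) ∂P

/-- The cost `∫ Σ_j W(x)({a_j}) log₂ (W(x)({a_j}) / Q_j) dP(x)` of a Markov kernel,
with the conventions `0 · log 0 = 0` (automatic in Lean) and value `⊤` if on a set of
positive `P`-measure `w x j > 0` for some `j` with `Q j = 0`. -/
noncomputable def wCost {k : ℕ} (P : Measure ℝ) (Q : Fin k → ℝ)
    (w : ℝ → Fin k → ℝ) : EReal :=
  if ∀ᵐ x ∂P, ∀ j, 0 < w x j → 0 < Q j then
    ((∫ x, ∑ j, w x j * Real.logb 2 (w x j / Q j) ∂P : ℝ) : EReal)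
  else ⊤

/-- `R(P,Q,D)`: infimum over Markov kernels `w` from `ℝ` to `Fin k` with
`∫ Σ_j w x j ρ(x,a_j) dP ≤ D` of the relative-entropy cost. -/
noncomputable def RPQ {k : ℕ} (P : Measure ℝ) (ρ : ℝ → Fin k → ℝ)
    (Q : Fin k → ℝ) (D : ℝ) : EReal :=
  ⨅ w ∈ {w : ℝ → Fin k → ℝ | Measurable w ∧ (∀ x j, 0 ≤ w x j) ∧
      (∀ x, ∑ j, w x j = 1) ∧ ∫ x, ∑ j, w x j * ρ x j ∂P ≤ D}, wCost P Q w

/-- The rate-distortion function `R(D) = inf_Q R(P,Q,D)`. -/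
noncomputable def RofD {k : ℕ} (P : Measure ℝ) (ρ : ℝ → Fin k → ℝ) (D : ℝ) : EReal :=
  ⨅ Q ∈ {Q : Fin k → ℝ | IsPmf Q}, RPQ P ρ Q D

/-- `D_max = min_j E_P[ρ(X,a_j)]`. -/
noncomputable def Dmax {k : ℕ} (P : Measure ℝ) (ρ : ℝ → Fin k → ℝ) : ℝ :=
  sInf (Set.range fun j => ∫ x, ρ x j ∂P)

/-- `D_min^{P,Q} = E_P[min_{a ∈ supp Q} ρ(X,a)]`. -/
noncomputable def DminPQ {k : ℕ} (P : Measure ℝ) (ρ : ℝ → Fin k → ℝ)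
    (Q : Fin k → ℝ) : ℝ :=
  ∫ x, (⨅ j : {j : Fin k // 0 < Q j}, ρ x (j : Fin k)) ∂P

/-- `D_max^{P,Q} = Σ_j Q_j · E_P[ρ(X,a_j)]`. -/
noncomputable def DmaxPQ {k : ℕ} (P : Measure ℝ) (ρ : ℝ → Fin k → ℝ)
    (Q : Fin k → ℝ) : ℝ :=
  ∑ j, Q j * ∫ x, ρ x j ∂P

/-- The Fenchel–Legendre transform `Λ*_{P,Q}(D) = sup_{λ ≤ 0} [λ·D − Λ_{P,Q}(λ)]`. -/
noncomputable def LamStar {k : ℕ} (P : Measure ℝ) (ρ : ℝ → Fin k → ℝ)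
    (Q : Fin k → ℝ) (D : ℝ) : EReal :=
  ⨆ l ∈ Set.Iic (0 : ℝ), ((l * D - Lam P ρ Q l : ℝ) : EReal)

/-!
Pointwise in `x`, tilting `Q` by `s = l • ρ x` decomposes the relative entropy of any `v ≪ Q` as
`H(v | Q) = ⟨v, s⟩ - log Z(s) + H(v | tilt Q s)`. Dropping the last, nonnegative term and
integrating gives weak duality. It vanishes for `v = tilt Q s`, so the tilted channel with parameter
`l` has rate `l * d l - ∫ log Z`, where `d l` is its mean distortion, and it closes the duality gap
as soon as `l * (d l - D) = 0`. Continuity of `d` supplies such an `l ≤ 0` unless `D < d l` for all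
`l ≤ 0`. In that case let `l → -∞`: either the limiting channel still meets the constraint, and its
rate is a limit of rates below the dual values, or `d l - D` stays bounded away from `0` and the
dual values `l * (D - d l) + rate` are unbounded.
-/

section DualityProof

open Filter Function InformationTheory Topology Matrix

section FiniteAlphabet

variable {ι : Type*} [Fintype ι] {Q v : ι → ℝ}

/-- The partition function `Z(s) = ∑ j, Q j * exp (s j)` of the weights `Q` at the potential `s`. -/
noncomputable def partitionFn (Q s : ι → ℝ) : ℝ := ∑ j, Q j * exp (s j)

/-- The exponentially tilted probability vector, proportional to `Q j * exp (s j)`. -/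
noncomputable def tilt (Q s : ι → ℝ) (j : ι) : ℝ := Q j * exp (s j) / partitionFn Q s

/-- The relative entropy of `v` with respect to `Q`, in nats. It is meaningful only when `v`
vanishes where `Q` does: a term with `Q j = 0` contributes the junk value `0` rather than `⊤`. -/
noncomputable def relEntropy (v Q : ι → ℝ) : ℝ := ∑ j, v j * log (v j / Q j)

-- `0 < Q` is the product order: `Q` is nonnegative and not identically zero.
lemma partitionFn_pos (hQ : 0 < Q) (s : ι → ℝ) : 0 < partitionFn Q s := by
  obtain ⟨hQ0, j, hj⟩ := Pi.lt_def.1 hQ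
  exact sum_pos' (fun i _ => mul_nonneg (hQ0 i) (exp_pos _).le)
    ⟨j, mem_univ j, mul_pos hj (exp_pos _)⟩

lemma tilt_mem_stdSimplex (hQ : 0 < Q) (s : ι → ℝ) : tilt Q s ∈ stdSimplex ℝ ι := by
  refine ⟨fun j => div_nonneg (mul_nonneg (hQ.le j) (exp_pos _).le) (partitionFn_pos hQ s).le, ?_⟩
  simp only [tilt, ← sum_div]
  exact div_self (partitionFn_pos hQ s).ne'

lemma support_tilt (hQ : 0 < Q) (s : ι → ℝ) : support (tilt Q s) = support Q := by
  ext j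
  simp [tilt, (partitionFn_pos hQ s).ne']

lemma tilt_sub_const (Q s : ι → ℝ) (c : ℝ) : tilt Q (fun j => s j - c) = tilt Q s := by
  ext j
  simp only [tilt, partitionFn, exp_sub, mul_div_assoc', ← sum_div]
  exact div_div_div_cancel_right₀ (exp_pos c).ne' _ _

lemma continuous_partitionFn (Q : ι → ℝ) : Continuous (partitionFn Q) := by
  unfold partitionFn
  fun_prop

lemma continuous_tilt (hQ : 0 < Q) : Continuous (tilt Q) :=
  continuous_pi fun j => Continuous.div (by fun_prop) (continuous_partitionFn Q)
    fun s => (partitionFn_pos hQ s).ne'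

lemma relEntropy_self (v : ι → ℝ) : relEntropy v v = 0 :=
  sum_eq_zero fun j _ => by by_cases h : v j = 0 <;> simp [h]

lemma relEntropy_nonneg (hv : v ∈ stdSimplex ℝ ι) (hQ : Q ∈ stdSimplex ℝ ι)
    (hvQ : support v ⊆ support Q) : 0 ≤ relEntropy v Q := by
  have term_eq (j : ι) : v j * log (v j / Q j) = Q j * klFun (v j / Q j) + (v j - Q j) := by
    by_cases hQj : Q j = 0
    · simp [hQj, notMem_support.1 (mt (@hvQ j) (notMem_support.2 hQj))]
    · rw [klFun_apply]
      field_simp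
      ring
  simp only [relEntropy, term_eq, sum_add_distrib, sum_sub_distrib, hv.2, hQ.2, sub_self, add_zero]
  exact sum_nonneg fun j _ => mul_nonneg (hQ.1 j) (klFun_nonneg (div_nonneg (hv.1 j) (hQ.1 j)))

lemma relEntropy_eq_add_relEntropy_tilt (hQ : 0 < Q) (hv : ∑ j, v j = 1)
    (hvQ : support v ⊆ support Q) (s : ι → ℝ) :
    relEntropy v Q = v ⬝ᵥ s - log (partitionFn Q s) + relEntropy v (tilt Q s) := by
  have term_eq (j : ι) : v j * log (v j / Q j) =
      v j * s j - v j * log (partitionFn Q s) + v j * log (v j / tilt Q s j) := by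
    by_cases hvj : v j = 0
    · simp [hvj]
    · have hQj : Q j ≠ 0 := hvQ hvj
      have hZ := (partitionFn_pos hQ s).ne'
      rw [tilt, log_div hvj hQj, log_div hvj (by positivity), log_div (by positivity) hZ,
        log_mul hQj (exp_ne_zero _), log_exp]
      ring
  simp only [relEntropy, dotProduct, term_eq, sum_add_distrib, sum_sub_distrib, ← sum_mul, hv,
    one_mul]

lemma relEntropy_tilt (hQ : 0 < Q) (s : ι → ℝ) :
    relEntropy (tilt Q s) Q = tilt Q s ⬝ᵥ s - log (partitionFn Q s) := by
  rw [relEntropy_eq_add_relEntropy_tilt hQ (tilt_mem_stdSimplex hQ s).2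
    (support_tilt hQ s).subset s, relEntropy_self, add_zero]

lemma dotProduct_sub_log_partitionFn_le_relEntropy (hQ : 0 < Q) (hv : v ∈ stdSimplex ℝ ι)
    (hvQ : support v ⊆ support Q) (s : ι → ℝ) :
    v ⬝ᵥ s - log (partitionFn Q s) ≤ relEntropy v Q := by
  rw [relEntropy_eq_add_relEntropy_tilt hQ hv.2 hvQ s]
  exact le_add_of_nonneg_right <|
    relEntropy_nonneg hv (tilt_mem_stdSimplex hQ s) ((support_tilt hQ s).symm ▸ hvQ)

lemma continuous_relEntropy (Q : ι → ℝ) : Continuous fun v => relEntropy v Q := by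
  have term_eq (v : ι → ℝ) (j : ι) :
      v j * log (v j / Q j) = Q j * (v j / Q j * log (v j / Q j)) := by
    by_cases hQj : Q j = 0
    · simp [hQj]
    · rw [← mul_assoc, mul_div_cancel₀ _ hQj]
  simp only [relEntropy, term_eq]
  exact continuous_finsetSum _ fun j _ =>
    (continuous_mul_log.comp ((continuous_apply j).div_const _)).const_mul _

lemma exists_norm_relEntropy_le (Q : ι → ℝ) :
    ∃ C, ∀ v ∈ stdSimplex ℝ ι, ‖relEntropy v Q‖ ≤ C :=
  (isCompact_stdSimplex ℝ ι).exists_bound_of_continuousOn (continuous_relEntropy Q).continuousOn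

lemma norm_dotProduct_le_of_mem_stdSimplex (hv : v ∈ stdSimplex ℝ ι) (r : ι → ℝ) :
    ‖v ⬝ᵥ r‖ ≤ ‖r‖ :=
  calc ‖v ⬝ᵥ r‖ ≤ ∑ j, v j * ‖r‖ := norm_sum_le_of_le _ fun j _ => by
        rw [norm_mul, norm_of_nonneg (hv.1 j)]
        exact mul_le_mul_of_nonneg_left (norm_le_pi_norm r j) (hv.1 j)
    _ = ‖r‖ := by rw [← sum_mul, hv.2, one_mul]

lemma tendsto_exp_mul_atBot {a : ℝ} (ha : 0 ≤ a) :
    Tendsto (fun l => exp (l * a)) atBot (𝓝 (if a = 0 then 1 else 0)) := by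
  split_ifs with h
  · simp [h]
  · exact tendsto_exp_atBot.comp (tendsto_id.atBot_mul_const (ha.lt_of_ne' h))

-- The limit is `Q` conditioned on the set where `r` attains its minimum over the support of `Q`.
lemma exists_tendsto_tilt_smul_atBot (hQ : 0 < Q) (r : ι → ℝ) :
    ∃ v, Tendsto (fun l : ℝ => tilt Q (l • r)) atBot (𝓝 v) := by
  obtain ⟨hQ0, j₀, hj₀⟩ := Pi.lt_def.1 hQ
  obtain ⟨m, hm, hmin⟩ := exists_min_image {j | 0 < Q j} r ⟨j₀, by simpa using hj₀⟩
  simp only [mem_filter, mem_univ, true_and] at hm hmin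
  have weight_tendsto (j : ι) : Tendsto (fun l => Q j * exp (l * (r j - r m))) atBot
      (𝓝 (Q j * if r j - r m = 0 then 1 else 0)) := by
    rcases (hQ0 j).eq_or_lt with hj | hj
    · simp [← hj]
    · exact (tendsto_exp_mul_atBot (sub_nonneg.2 (hmin j hj))).const_mul _
  have limit_pos : 0 < ∑ j, Q j * (if r j - r m = 0 then 1 else 0 : ℝ) :=
    sum_pos' (fun j _ => mul_nonneg (hQ0 j) (by positivity)) ⟨m, mem_univ m, by simpa using hm⟩
  refine ⟨_, tendsto_pi_nhds.2 fun j => ((weight_tendsto j).div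
    (tendsto_finsetSum univ fun i _ => weight_tendsto i) limit_pos.ne').congr fun l => ?_⟩
  rw [← tilt_sub_const Q (l • r) (l * r m)]
  simp [tilt, partitionFn, mul_sub]

end FiniteAlphabet

section Channels

variable {Ω ι : Type*} [MeasurableSpace Ω] [Fintype ι] {P : Measure Ω} {ρ w : Ω → ι → ℝ}
  {Q : ι → ℝ} {D : ℝ}

/-- `w` is a Markov kernel from `Ω` to the finite alphabet `ι`, given by its probability vectors:
a test channel of rate-distortion theory. -/
structure IsTestChannel (w : Ω → ι → ℝ) : Prop where
  measurable : Measurable w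
  mem_stdSimplex (x : Ω) : w x ∈ stdSimplex ℝ ι

/-- The expected distortion of the channel `w` under the source `P`. -/
noncomputable def meanDistortion (P : Measure Ω) (ρ w : Ω → ι → ℝ) : ℝ := ∫ x, w x ⬝ᵥ ρ x ∂P

/-- The mean relative entropy of the channel `w` with respect to the output weights `Q`,
in nats. -/
noncomputable def rate (P : Measure Ω) (Q : ι → ℝ) (w : Ω → ι → ℝ) : ℝ :=
  ∫ x, relEntropy (w x) Q ∂P

/-- The Lagrange dual function of rate minimisation at distortion level `D`; for `l ≤ 0` it is
the objective `l * D - Λ(l)` of the Fenchel–Legendre transform. -/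
noncomputable def dualValue (P : Measure Ω) (ρ : Ω → ι → ℝ) (Q : ι → ℝ) (D l : ℝ) : ℝ :=
  l * D - ∫ x, log (partitionFn Q (l • ρ x)) ∂P

/-- The channel with rows `Q j * exp (l * ρ x j)`, normalised; it minimises
`rate - l * meanDistortion`. -/
noncomputable def gibbsChannel (ρ : Ω → ι → ℝ) (Q : ι → ℝ) (l : ℝ) (x : Ω) : ι → ℝ :=
  tilt Q (l • ρ x)

lemma IsTestChannel.aestronglyMeasurable_dotProduct (hw : IsTestChannel w)
    (hρ : AEStronglyMeasurable ρ P) : AEStronglyMeasurable (fun x => w x ⬝ᵥ ρ x) P :=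
  (continuous_fst.dotProduct continuous_snd).comp_aestronglyMeasurable
    (hw.measurable.aestronglyMeasurable.prodMk hρ)

lemma IsTestChannel.integrable_dotProduct (hw : IsTestChannel w) (hρ : Integrable ρ P) :
    Integrable (fun x => w x ⬝ᵥ ρ x) P :=
  hρ.norm.mono' (hw.aestronglyMeasurable_dotProduct hρ.aestronglyMeasurable)
    (.of_forall fun x => norm_dotProduct_le_of_mem_stdSimplex (hw.mem_stdSimplex x) _)

lemma IsTestChannel.measurable_relEntropy (hw : IsTestChannel w) (Q : ι → ℝ) :
    Measurable fun x => relEntropy (w x) Q :=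
  (continuous_relEntropy Q).measurable.comp hw.measurable

lemma IsTestChannel.integrable_relEntropy [IsFiniteMeasure P] (hw : IsTestChannel w)
    (Q : ι → ℝ) : Integrable (fun x => relEntropy (w x) Q) P :=
  have ⟨C, hC⟩ := exists_norm_relEntropy_le Q
  .of_bound (hw.measurable_relEntropy Q).aestronglyMeasurable C
    (.of_forall fun x => hC _ (hw.mem_stdSimplex x))

section Limits

variable {α : Type*} {F : Filter α} [F.IsCountablyGenerated] {W : α → Ω → ι → ℝ}

lemma tendsto_meanDistortion (hρ : Integrable ρ P) (hW : ∀ a, IsTestChannel (W a))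
    (hlim : ∀ x, Tendsto (fun a => W a x) F (𝓝 (w x))) :
    Tendsto (fun a => meanDistortion P ρ (W a)) F (𝓝 (meanDistortion P ρ w)) :=
  tendsto_integral_filter_of_dominated_convergence (fun x => ‖ρ x‖)
    (.of_forall fun a => (hW a).aestronglyMeasurable_dotProduct hρ.aestronglyMeasurable)
    (.of_forall fun a => .of_forall fun x =>
      norm_dotProduct_le_of_mem_stdSimplex ((hW a).mem_stdSimplex x) _)
    hρ.norm
    (.of_forall fun x => tendsto_finsetSum _ fun j _ =>
      (tendsto_pi_nhds.1 (hlim x) j).mul_const _)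

lemma tendsto_rate [IsFiniteMeasure P] (Q : ι → ℝ) (hW : ∀ a, IsTestChannel (W a))
    (hlim : ∀ x, Tendsto (fun a => W a x) F (𝓝 (w x))) :
    Tendsto (fun a => rate P Q (W a)) F (𝓝 (rate P Q w)) :=
  have ⟨C, hC⟩ := exists_norm_relEntropy_le Q
  tendsto_integral_filter_of_dominated_convergence (fun _ => C)
    (.of_forall fun a => ((hW a).measurable_relEntropy Q).aestronglyMeasurable)
    (.of_forall fun a => .of_forall fun x => hC _ ((hW a).mem_stdSimplex x))
    (integrable_const C)
    (.of_forall fun x => ((continuous_relEntropy Q).tendsto _).comp (hlim x))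

end Limits

lemma isTestChannel_gibbsChannel (hQ : 0 < Q) (hρm : Measurable ρ) (l : ℝ) :
    IsTestChannel (gibbsChannel ρ Q l) where
  measurable := (continuous_tilt hQ).measurable.comp (hρm.const_smul l)
  mem_stdSimplex x := tilt_mem_stdSimplex hQ (l • ρ x)

lemma continuous_meanDistortion_gibbsChannel (hQ : 0 < Q) (hρm : Measurable ρ)
    (hρ : Integrable ρ P) : Continuous fun l => meanDistortion P ρ (gibbsChannel ρ Q l) :=
  continuous_iff_continuousAt.2 fun _ =>
    tendsto_meanDistortion hρ (isTestChannel_gibbsChannel hQ hρm) fun _ =>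
      ((continuous_tilt hQ).comp (continuous_id.smul continuous_const)).tendsto _

lemma exists_tendsto_gibbsChannel_atBot (hQ : 0 < Q) (hρm : Measurable ρ) :
    ∃ v : Ω → ι → ℝ, IsTestChannel v ∧ (∀ x, support (v x) ⊆ support Q) ∧
      ∀ x, Tendsto (fun l => gibbsChannel ρ Q l x) atBot (𝓝 (v x)) := by
  choose v hv using fun x => exists_tendsto_tilt_smul_atBot hQ (ρ x)
  have hgibbs := isTestChannel_gibbsChannel hQ hρm
  refine ⟨v, ⟨?_, fun x => ?_⟩, fun x j hvj hQj => hvj ?_, hv⟩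
  · exact measurable_of_tendsto_metrizable' atBot (fun l => (hgibbs l).measurable)
      (tendsto_pi_nhds.2 hv)
  · exact (isClosed_stdSimplex ℝ ι).mem_of_tendsto (hv x)
      (.of_forall fun l => (hgibbs l).mem_stdSimplex x)
  · refine tendsto_nhds_unique (tendsto_pi_nhds.1 (hv x) j) (tendsto_const_nhds.congr fun l => ?_)
    exact (notMem_support.1 ((support_tilt hQ _).symm ▸ notMem_support.2 hQj)).symm

lemma integrable_log_partitionFn [IsFiniteMeasure P] (hQ : 0 < Q) (hρm : Measurable ρ)
    (hρ : Integrable ρ P) (l : ℝ) : Integrable (fun x => log (partitionFn Q (l • ρ x))) P := by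
  have hgibbs := isTestChannel_gibbsChannel hQ hρm l
  refine (((hgibbs.integrable_dotProduct hρ).const_mul l).sub
    (hgibbs.integrable_relEntropy Q)).congr (.of_forall fun x => ?_)
  simp only [Pi.sub_apply, gibbsChannel, relEntropy_tilt hQ, dotProduct_smul, smul_eq_mul,
    sub_sub_cancel]

lemma integral_dotProduct_sub_log_partitionFn [IsFiniteMeasure P] (hQ : 0 < Q)
    (hρm : Measurable ρ) (hρ : Integrable ρ P) (hw : IsTestChannel w) (D l : ℝ) :
    ∫ x, (w x ⬝ᵥ (l • ρ x) - log (partitionFn Q (l • ρ x))) ∂P =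
      dualValue P ρ Q D l + l * (meanDistortion P ρ w - D) := by
  simp only [dotProduct_smul, smul_eq_mul]
  rw [integral_sub ((hw.integrable_dotProduct hρ).const_mul l)
    (integrable_log_partitionFn hQ hρm hρ l), integral_const_mul, dualValue, meanDistortion]
  ring

lemma rate_gibbsChannel [IsFiniteMeasure P] (hQ : 0 < Q) (hρm : Measurable ρ)
    (hρ : Integrable ρ P) (D l : ℝ) :
    rate P Q (gibbsChannel ρ Q l) =
      dualValue P ρ Q D l + l * (meanDistortion P ρ (gibbsChannel ρ Q l) - D) := by
  rw [← integral_dotProduct_sub_log_partitionFn hQ hρm hρ (isTestChannel_gibbsChannel hQ hρm l) D l]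
  simp only [rate, gibbsChannel, relEntropy_tilt hQ]

lemma dualValue_add_le_rate [IsFiniteMeasure P] (hQ : 0 < Q) (hρm : Measurable ρ)
    (hρ : Integrable ρ P) (hw : IsTestChannel w) (hwQ : ∀ᵐ x ∂P, support (w x) ⊆ support Q)
    (D l : ℝ) : dualValue P ρ Q D l + l * (meanDistortion P ρ w - D) ≤ rate P Q w := by
  rw [← integral_dotProduct_sub_log_partitionFn hQ hρm hρ hw D l]
  refine integral_mono_ae ?_ (hw.integrable_relEntropy Q) (hwQ.mono fun x hx =>
    dotProduct_sub_log_partitionFn_le_relEntropy hQ (hw.mem_stdSimplex x) hx _)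
  simp only [dotProduct_smul, smul_eq_mul]
  exact ((hw.integrable_dotProduct hρ).const_mul l).sub
    (integrable_log_partitionFn hQ hρm hρ l)

theorem dualValue_le_rate [IsFiniteMeasure P] (hQ : 0 < Q) (hρm : Measurable ρ)
    (hρ : Integrable ρ P) (hw : IsTestChannel w) (hwQ : ∀ᵐ x ∂P, support (w x) ⊆ support Q)
    (hwD : meanDistortion P ρ w ≤ D) {l : ℝ} (hl : l ≤ 0) : dualValue P ρ Q D l ≤ rate P Q w :=
  (le_add_of_nonneg_right (mul_nonneg_of_nonpos_of_nonpos hl (sub_nonpos.2 hwD))).trans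
    (dualValue_add_le_rate hQ hρm hρ hw hwQ D l)

lemma tendsto_dualValue_atBot [IsFiniteMeasure P] (hQ : 0 < Q) (hρm : Measurable ρ)
    (hρ : Integrable ρ P) {v : Ω → ι → ℝ}
    (hlim : ∀ x, Tendsto (fun l => gibbsChannel ρ Q l x) atBot (𝓝 (v x)))
    (hD : D < meanDistortion P ρ v) : Tendsto (dualValue P ρ Q D) atBot atTop := by
  have hgibbs := isTestChannel_gibbsChannel hQ hρm
  have gap_tendsto := (tendsto_meanDistortion hρ hgibbs hlim).const_sub D
  refine tendsto_atTop_mono (fun l => ?_) <| tendsto_atTop_add_const_left _ (dualValue P ρ Q D 0) <|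
    tendsto_id.atBot_mul_neg (sub_neg.2 hD) gap_tendsto
  have rate_ge := dualValue_add_le_rate hQ hρm hρ (hgibbs l)
    (.of_forall fun _ => (support_tilt hQ _).subset) D 0
  rw [rate_gibbsChannel hQ hρm hρ D l] at rate_ge
  dsimp only [id]
  linarith

lemma exists_nonpos_complementary_slackness {d : ℝ → ℝ} (hd : Continuous d)
    (h : ∃ l ≤ 0, d l ≤ D) : ∃ l ≤ 0, d l ≤ D ∧ l * (d l - D) = 0 := by
  obtain ⟨l, hl, hlD⟩ := h
  rcases le_total (d 0) D with h0 | h0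
  · exact ⟨0, le_rfl, h0, zero_mul _⟩
  · obtain ⟨t, ht, rfl⟩ := intermediate_value_Icc hl hd.continuousOn ⟨hlD, h0⟩
    exact ⟨t, ht.2, le_rfl, by simp⟩

theorem exists_rate_le_of_dualValue_le [IsFiniteMeasure P] (hQ : 0 < Q) (hρm : Measurable ρ)
    (hρ : Integrable ρ P) {B : ℝ} (hB : ∀ l ≤ 0, dualValue P ρ Q D l ≤ B) :
    ∃ w : Ω → ι → ℝ, IsTestChannel w ∧ (∀ x, support (w x) ⊆ support Q) ∧
      meanDistortion P ρ w ≤ D ∧ rate P Q w ≤ B := by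
  have hgibbs := isTestChannel_gibbsChannel hQ hρm
  by_cases hfeas : ∃ l ≤ 0, meanDistortion P ρ (gibbsChannel ρ Q l) ≤ D
  · obtain ⟨l, hl, hlD, hslack⟩ := exists_nonpos_complementary_slackness
      (continuous_meanDistortion_gibbsChannel hQ hρm hρ) hfeas
    refine ⟨_, hgibbs l, fun _ => (support_tilt hQ _).subset, hlD, ?_⟩
    rw [rate_gibbsChannel hQ hρm hρ D l, hslack, add_zero]
    exact hB l hl
  · push Not at hfeas
    obtain ⟨v, hv, hvQ, hlim⟩ := exists_tendsto_gibbsChannel_atBot hQ hρm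
    refine ⟨v, hv, hvQ, ?_, ?_⟩
    · by_contra! hD
      obtain ⟨l, hlB, hl⟩ := ((tendsto_dualValue_atBot hQ hρm hρ hlim hD).eventually_gt_atTop B
        |>.and (eventually_le_atBot 0)).exists
      exact (hB l hl).not_gt hlB
    · refine le_of_tendsto (tendsto_rate Q hgibbs hlim) ?_
      filter_upwards [eventually_le_atBot 0] with l hl
      have rate_le : rate P Q (gibbsChannel ρ Q l) ≤ dualValue P ρ Q D l := by
        rw [rate_gibbsChannel hQ hρm hρ D l]
        exact add_le_of_nonpos_right
          (mul_nonpos_of_nonpos_of_nonneg hl (sub_nonneg.2 (hfeas l hl).le))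
      exact rate_le.trans (hB l hl)

end Channels

section RateDistortion

variable {k : ℕ} {P : Measure ℝ} {ρ w : ℝ → Fin k → ℝ} {Q : Fin k → ℝ} {D : ℝ}

lemma logb_two_exp_one_pos : 0 < logb 2 (exp 1) :=
  logb_pos one_lt_two (one_lt_exp_iff.2 one_pos)

lemma wCost_eq_ite (hQ : 0 ≤ Q) (hw : ∀ x j, 0 ≤ w x j) :
    wCost P Q w = if ∀ᵐ x ∂P, support (w x) ⊆ support Q then
      ((logb 2 (exp 1) : ℝ) : EReal) * rate P Q w else ⊤ := by
  have nats_eq : ∫ x, ∑ j, w x j * logb 2 (w x j / Q j) ∂P = logb 2 (exp 1) * rate P Q w := by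
    simp only [rate, relEntropy, ← integral_const_mul, mul_sum, logb, log_exp]
    congr! 3
    ring
  have support_iff (x : ℝ) : (∀ j, 0 < w x j → 0 < Q j) ↔ support (w x) ⊆ support Q :=
    forall_congr' fun j => by
      rw [(hw x j).lt_iff_ne', (show 0 ≤ Q j from hQ j).lt_iff_ne']; rfl
  simp only [wCost, nats_eq, support_iff, EReal.coe_mul]

lemma RPQ_le_of_dualValue_le [IsFiniteMeasure P] (hQ : 0 < Q) (hρm : Measurable ρ)
    (hρ : Integrable ρ P) {B : ℝ} (hB : ∀ l ≤ 0, dualValue P ρ Q D l ≤ B) :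
    RPQ P ρ Q D ≤ ((logb 2 (exp 1) : ℝ) : EReal) * B := by
  obtain ⟨w, hw, hwQ, hwD, hwB⟩ := exists_rate_le_of_dualValue_le hQ hρm hρ hB
  have hw0 (x : ℝ) := (hw.mem_stdSimplex x).1
  refine iInf₂_le_of_le w ⟨hw.measurable, hw0, fun x => (hw.mem_stdSimplex x).2, hwD⟩ ?_
  rw [wCost_eq_ite hQ.le hw0, if_pos (.of_forall hwQ)]
  rw [← EReal.coe_mul, ← EReal.coe_mul, EReal.coe_le_coe_iff]
  exact mul_le_mul_of_nonneg_left hwB logb_two_exp_one_pos.le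

lemma LamStar_le_rate [IsFiniteMeasure P] (hQ : 0 < Q) (hρm : Measurable ρ)
    (hρ : Integrable ρ P) (hw : IsTestChannel w) (hwQ : ∀ᵐ x ∂P, support (w x) ⊆ support Q)
    (hwD : meanDistortion P ρ w ≤ D) : LamStar P ρ Q D ≤ rate P Q w :=
  iSup₂_le fun _ hl => EReal.coe_le_coe_iff.2 (dualValue_le_rate hQ hρm hρ hw hwQ hwD hl)

lemma RPQ_le_mul_LamStar [IsFiniteMeasure P] (hQ : 0 < Q) (hρm : Measurable ρ)
    (hρ : Integrable ρ P) : RPQ P ρ Q D ≤ ((logb 2 (exp 1) : ℝ) : EReal) * LamStar P ρ Q D := by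
  have dual_le (l : ℝ) (hl : l ≤ 0) : (dualValue P ρ Q D l : EReal) ≤ LamStar P ρ Q D :=
    le_iSup₂_of_le l hl le_rfl
  induction h : LamStar P ρ Q D with
  | bot => exact absurd (h ▸ dual_le 0 le_rfl) (EReal.bot_lt_coe _).not_ge
  | coe B => exact RPQ_le_of_dualValue_le hQ hρm hρ fun l hl =>
      EReal.coe_le_coe_iff.1 (h ▸ dual_le l hl)
  | top => exact le_top.trans_eq (EReal.coe_mul_top_of_pos logb_two_exp_one_pos).symm

lemma mul_LamStar_le_RPQ [IsFiniteMeasure P] (hQ : 0 < Q) (hρm : Measurable ρ)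
    (hρ : Integrable ρ P) : ((logb 2 (exp 1) : ℝ) : EReal) * LamStar P ρ Q D ≤ RPQ P ρ Q D := by
  refine le_iInf₂ fun w ⟨hwm, hw0, hw1, hwD⟩ => ?_
  rw [wCost_eq_ite hQ.le hw0]
  split_ifs with hwQ
  · exact mul_le_mul_of_nonneg_left
      (LamStar_le_rate hQ hρm hρ ⟨hwm, fun x => ⟨hw0 x, hw1 x⟩⟩ hwQ hwD)
      (EReal.coe_nonneg.2 logb_two_exp_one_pos.le)
  · exact le_top

end RateDistortion

end DualityProof

theorem stmt_11_general {k : ℕ} (P : Measure ℝ) [IsFiniteMeasure P] (ρ : ℝ → Fin k → ℝ)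
    (hρm : Measurable ρ) (hρ : Integrable ρ P) (Q : Fin k → ℝ) (hQ : 0 < Q) (D : ℝ) :
    RPQ P ρ Q D = ((Real.logb 2 (Real.exp 1) : ℝ) : EReal) * LamStar P ρ Q D :=
  le_antisymm (RPQ_le_mul_LamStar hQ hρm hρ) (mul_LamStar_le_RPQ hQ hρm hρ)

lemma IsPmf.pos {k : ℕ} {Q : Fin k → ℝ} (hQ : IsPmf Q) : 0 < Q :=
  lt_of_le_of_ne hQ.1 fun h => by simpa [← h] using hQ.2

lemma integrable_of_forall_mem_Icc {Ω ι : Type*} [MeasurableSpace Ω] [Fintype ι]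
    {P : Measure Ω} [IsFiniteMeasure P] {A : Set Ω} (hA : P Aᶜ = 0) {a b : ℝ} {ρ : Ω → ι → ℝ}
    (hρm : Measurable ρ) (hρ : ∀ x ∈ A, ∀ j, ρ x j ∈ Set.Icc a b) : Integrable ρ P :=
  .of_eval fun j => .of_mem_Icc a b ((measurable_pi_iff.1 hρm j).aemeasurable)
    ((show ∀ᵐ x ∂P, x ∈ A from hA).mono fun x hx => hρ x hx j)

/-- **Proposition 1(ii).** For every pmf `Q` and every `D ≥ 0`,
`R(P,Q,D) = (log₂ e) · Λ*_{P,Q}(D)`. -/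
theorem stmt_11 {k : ℕ} (hk : 0 < k) (A : Set ℝ) (hA : MeasurableSet A)
    (P : Measure ℝ) [IsProbabilityMeasure P] (hsupp : P Aᶜ = 0)
    (M : ℝ) (ρ : ℝ → Fin k → ℝ) (hρmeas : ∀ j, Measurable fun x => ρ x j)
    (hρnn : ∀ x ∈ A, ∀ j, 0 ≤ ρ x j) (hρM : ∀ x ∈ A, ∀ j, ρ x j ≤ M)
    (hρmin : ∀ x ∈ A, ∃ j, ρ x j = 0)
    (Q : Fin k → ℝ) (hQ : IsPmf Q) (D : ℝ) (hD : 0 ≤ D) :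
    RPQ P ρ Q D = ((Real.logb 2 (Real.exp 1) : ℝ) : EReal) * LamStar P ρ Q D :=
  have hρm := measurable_pi_iff.2 hρmeas
  stmt_11_general P ρ hρm
    (integrable_of_forall_mem_Icc hsupp hρm fun x hx j => ⟨hρnn x hx j, hρM x hx j⟩) Q hQ.pos D
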